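/- arXiv:1808.00587 — 2 statements merged into one kernel-verified Lean document; each statement's English description precedes it below -/
import Mathlib

section
/- Let ε̄ ∈ int(E) and suppose the invariancy set I_inv = {ε ∈ int(E) : π(ε) = π(ε̄)} is bounded. Let Q_N be a matrix whose columns form an orthonormal basis of N(ε̄), and define α_inv = inf and β_inv = sup of the set {ε ∈ ℝ : there exist y ∈ ℝ^m and a symmetric positive definite U_S of size dim N(ε̄) with Σ_i y_i A^i + Q_N U_S Q_N^T = C + ε C̄}. Then α_inv = inf I_inv and β_inv = sup I_inv, i.e., the boundary points of I_inv are obtained by this pair of auxiliary optimization problems. -/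
open Matrix Set

noncomputable section

variable {n m : ℕ}

/-- Feasibility for the primal SDO problem `(P_ε)` (the feasible set does not depend on `ε`). -/
def PrimalFeasible (A : Fin m → Matrix (Fin n) (Fin n) ℝ) (b : Fin m → ℝ)
    (X : Matrix (Fin n) (Fin n) ℝ) : Prop :=
  X.IsSymm ∧ (∀ i, ((A i) * X).trace = b i) ∧ X.PosSemidef

/-- Feasibility for the dual SDO problem `(D_ε)`. -/
def DualFeasible (C Cbar : Matrix (Fin n) (Fin n) ℝ)
    (A : Fin m → Matrix (Fin n) (Fin n) ℝ) (ε : ℝ)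
    (y : Fin m → ℝ) (S : Matrix (Fin n) (Fin n) ℝ) : Prop :=
  S.IsSymm ∧ (∑ i, y i • A i) + S = C + ε • Cbar ∧ S.PosSemidef

/-- The optimal value function `v(ε)` of `(P_ε)`, with values in `EReal`. -/
def vfun (C Cbar : Matrix (Fin n) (Fin n) ℝ) (A : Fin m → Matrix (Fin n) (Fin n) ℝ)
    (b : Fin m → ℝ) (ε : ℝ) : EReal :=
  sInf ((fun X => (((C + ε • Cbar) * X).trace : EReal)) '' {X | PrimalFeasible A b X})

/-- `E = {ε : v(ε) > -∞}`. -/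
def Eset (C Cbar : Matrix (Fin n) (Fin n) ℝ) (A : Fin m → Matrix (Fin n) (Fin n) ℝ)
    (b : Fin m → ℝ) : Set ℝ :=
  {ε | ⊥ < vfun C Cbar A b ε}

/-- The primal optimal set `P*(ε)`. -/
def PrimalOpt (C Cbar : Matrix (Fin n) (Fin n) ℝ) (A : Fin m → Matrix (Fin n) (Fin n) ℝ)
    (b : Fin m → ℝ) (ε : ℝ) : Set (Matrix (Fin n) (Fin n) ℝ) :=
  {X | PrimalFeasible A b X ∧ ∀ X', PrimalFeasible A b X' →
    ((C + ε • Cbar) * X).trace ≤ ((C + ε • Cbar) * X').trace}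

/-- The dual optimal set `D*(ε)`. -/
def DualOpt (C Cbar : Matrix (Fin n) (Fin n) ℝ) (A : Fin m → Matrix (Fin n) (Fin n) ℝ)
    (b : Fin m → ℝ) (ε : ℝ) : Set ((Fin m → ℝ) × Matrix (Fin n) (Fin n) ℝ) :=
  {p | DualFeasible C Cbar A ε p.1 p.2 ∧ ∀ y' S', DualFeasible C Cbar A ε y' S' →
    ∑ i, b i * y' i ≤ ∑ i, b i * p.1 i}

/-- A maximally complementary optimal solution: `X` lies in the relative interior of `P*(ε)`
and `(y, S)` in the relative interior of `D*(ε)`. -/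
def MaxComp (C Cbar : Matrix (Fin n) (Fin n) ℝ) (A : Fin m → Matrix (Fin n) (Fin n) ℝ)
    (b : Fin m → ℝ) (ε : ℝ) (X : Matrix (Fin n) (Fin n) ℝ) (y : Fin m → ℝ)
    (S : Matrix (Fin n) (Fin n) ℝ) : Prop :=
  X ∈ intrinsicInterior ℝ (PrimalOpt C Cbar A b ε) ∧
    (y, S) ∈ intrinsicInterior ℝ (DualOpt C Cbar A b ε)

/-- `π(ε) = π(ε')`: the optimal partitions at `ε` and `ε'` coincide, expressed through
maximally complementary solutions (`B = range X*`, `N = range S*`, `T` being determined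
by `B` and `N`). -/
def SamePartition (C Cbar : Matrix (Fin n) (Fin n) ℝ) (A : Fin m → Matrix (Fin n) (Fin n) ℝ)
    (b : Fin m → ℝ) (ε ε' : ℝ) : Prop :=
  ∃ X y S X' y' S', MaxComp C Cbar A b ε X y S ∧ MaxComp C Cbar A b ε' X' y' S' ∧
    LinearMap.range X.mulVecLin = LinearMap.range X'.mulVecLin ∧
    LinearMap.range S.mulVecLin = LinearMap.range S'.mulVecLin

/-- The standing assumptions: symmetric data, linearly independent constraint matrices and
the interior point condition at `ε = 0`. -/
def StandingAssumptions (C Cbar : Matrix (Fin n) (Fin n) ℝ)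
    (A : Fin m → Matrix (Fin n) (Fin n) ℝ) (b : Fin m → ℝ) : Prop :=
  C.IsSymm ∧ Cbar.IsSymm ∧ (∀ i, (A i).IsSymm) ∧ LinearIndependent ℝ A ∧
    ∃ X y S, PrimalFeasible A b X ∧ X.PosDef ∧ DualFeasible C Cbar A 0 y S ∧ S.PosDef

/-- The invariancy set of `ε̄`. -/
def InvSet (C Cbar : Matrix (Fin n) (Fin n) ℝ) (A : Fin m → Matrix (Fin n) (Fin n) ℝ)
    (b : Fin m → ℝ) (εbar : ℝ) : Set ℝ :=
  {ε | ε ∈ interior (Eset C Cbar A b) ∧ SamePartition C Cbar A b ε εbar}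

/-- `dim B(ε) = dim B(ε')` and `dim N(ε) = dim N(ε')`, expressed through maximally
complementary solutions. -/
def DimsMatch (C Cbar : Matrix (Fin n) (Fin n) ℝ) (A : Fin m → Matrix (Fin n) (Fin n) ℝ)
    (b : Fin m → ℝ) (ε ε' : ℝ) : Prop :=
  ∀ X y S X' y' S', MaxComp C Cbar A b ε X y S → MaxComp C Cbar A b ε' X' y' S' →
    Module.finrank ℝ (LinearMap.range X.mulVecLin) =
        Module.finrank ℝ (LinearMap.range X'.mulVecLin) ∧
      Module.finrank ℝ (LinearMap.range S.mulVecLin) =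
        Module.finrank ℝ (LinearMap.range S'.mulVecLin)

/-- A transition point: a singleton invariancy set such that every neighborhood contains a
parameter at which `dim B` or `dim N` differs. -/
def IsTransitionPoint (C Cbar : Matrix (Fin n) (Fin n) ℝ) (A : Fin m → Matrix (Fin n) (Fin n) ℝ)
    (b : Fin m → ℝ) (εbar : ℝ) : Prop :=
  εbar ∈ interior (Eset C Cbar A b) ∧
    (∀ ε ∈ interior (Eset C Cbar A b), ε ≠ εbar → ¬ SamePartition C Cbar A b ε εbar) ∧
    ∀ ξ : ℝ, 0 < ξ → ∃ ε ∈ Set.Ioo (εbar - ξ) (εbar + ξ) ∩ interior (Eset C Cbar A b),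
      ¬ DimsMatch C Cbar A b ε εbar

/-- Existence of a strictly complementary optimal solution at `ε`. -/
def HasStrictComp (C Cbar : Matrix (Fin n) (Fin n) ℝ) (A : Fin m → Matrix (Fin n) (Fin n) ℝ)
    (b : Fin m → ℝ) (ε : ℝ) : Prop :=
  ∃ X y S, X ∈ PrimalOpt C Cbar A b ε ∧ (y, S) ∈ DualOpt C Cbar A b ε ∧ (X + S).PosDef

/-- Nonsingularity of the Jacobian `J(X, y, S)` of the optimality system, as a linear map on
`S^n × ℝ^m × S^n`: only the trivial symmetric triple is mapped to zero. -/
def JNonsingular (A : Fin m → Matrix (Fin n) (Fin n) ℝ)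
    (X S : Matrix (Fin n) (Fin n) ℝ) : Prop :=
  ∀ (DX DS : Matrix (Fin n) (Fin n) ℝ) (Dy : Fin m → ℝ), DX.IsSymm → DS.IsSymm →
    (∀ i, ((A i) * DX).trace = 0) → ((∑ i, Dy i • A i) + DS = 0) →
    (DX * S + S * DX + X * DS + DS * X = 0) → DX = 0 ∧ Dy = 0 ∧ DS = 0

/-- Primal nondegeneracy of a primal feasible `X`. -/
def PrimalNondeg (A : Fin m → Matrix (Fin n) (Fin n) ℝ)
    (X : Matrix (Fin n) (Fin n) ℝ) : Prop :=
  ∃ (r : ℕ) (M₁ : Matrix (Fin n) (Fin r) ℝ) (M₂ : Matrix (Fin n) (Fin (n - r)) ℝ),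
    M₁ᵀ * M₁ = 1 ∧ M₂ᵀ * M₂ = 1 ∧ M₁ᵀ * M₂ = 0 ∧
    LinearMap.range M₁.mulVecLin = LinearMap.range X.mulVecLin ∧
    LinearIndependent ℝ (fun i =>
      Matrix.fromBlocks (M₁ᵀ * (A i) * M₁) (M₁ᵀ * (A i) * M₂) (M₂ᵀ * (A i) * M₁) 0)

/-- Dual nondegeneracy of a dual feasible `(y, S)` (the condition involves only `S`). -/
def DualNondeg (A : Fin m → Matrix (Fin n) (Fin n) ℝ)
    (S : Matrix (Fin n) (Fin n) ℝ) : Prop :=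
  ∃ (k : ℕ) (N₁ : Matrix (Fin n) (Fin k) ℝ),
    N₁ᵀ * N₁ = 1 ∧ LinearMap.range N₁.mulVecLin = LinearMap.ker S.mulVecLin ∧
    ∀ W : Matrix (Fin k) (Fin k) ℝ, W.IsSymm →
      W ∈ Submodule.span ℝ (Set.range fun i => N₁ᵀ * (A i) * N₁)

/-- A central solution with parameter `μ` for the problems `(P_ε)` and `(D_ε)`. -/
def CentralSol (C Cbar : Matrix (Fin n) (Fin n) ℝ) (A : Fin m → Matrix (Fin n) (Fin n) ℝ)
    (b : Fin m → ℝ) (ε μ : ℝ) (X : Matrix (Fin n) (Fin n) ℝ) (y : Fin m → ℝ)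
    (S : Matrix (Fin n) (Fin n) ℝ) : Prop :=
  PrimalFeasible A b X ∧ DualFeasible C Cbar A ε y S ∧
    X * S = μ • (1 : Matrix (Fin n) (Fin n) ℝ)

/-- The Frobenius norm of a matrix. -/
def frobNorm {α β : Type*} [Fintype α] [Fintype β] (M : Matrix α β ℝ) : ℝ :=
  Real.sqrt (∑ i, ∑ j, (M i j) ^ 2)

/-- The spectral norm (induced 2-norm) of a square matrix. -/
def specNorm {N : ℕ} (M : Matrix (Fin N) (Fin N) ℝ) : ℝ :=
  ‖LinearMap.toContinuousLinearMap (Matrix.toEuclideanLin M)‖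

/-- The smallest eigenvalue of a symmetric matrix, via the Rayleigh quotient. -/
def lamMin {k : ℕ} (M : Matrix (Fin k) (Fin k) ℝ) : ℝ :=
  sInf {r : ℝ | ∃ x : Fin k → ℝ, (∑ i, (x i) ^ 2) = 1 ∧ r = x ⬝ᵥ M.mulVec x}

/-- `θ^μ`: the operator norm of the inverse of the Jacobian `J(X, y, S)` on
`S^n × ℝ^m × S^n`, characterized as the least constant `t ≥ 0` with
`‖(ΔX, Δy, ΔS)‖ ≤ t * ‖J(X,y,S)(ΔX, Δy, ΔS)‖` for all symmetric `ΔX`, `ΔS`. -/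
def thetaMu (A : Fin m → Matrix (Fin n) (Fin n) ℝ)
    (X S : Matrix (Fin n) (Fin n) ℝ) : ℝ :=
  sInf {t : ℝ | 0 ≤ t ∧ ∀ (DX DS : Matrix (Fin n) (Fin n) ℝ) (Dy : Fin m → ℝ),
    DX.IsSymm → DS.IsSymm →
    Real.sqrt (frobNorm DX ^ 2 + (∑ i, (Dy i) ^ 2) + frobNorm DS ^ 2) ≤
      t * Real.sqrt ((∑ i, (((A i) * DX).trace) ^ 2) +
        frobNorm ((∑ i, Dy i • A i) + DS) ^ 2 +
        frobNorm ((1 / 2 : ℝ) • (DX * S + S * DX + X * DS + DS * X)) ^ 2)}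

/-- A nonlinearity interval: a non-singleton open subinterval of `int(E)`, of maximal length,
on which `dim B(·)` and `dim N(·)` are constant while the optimal partition `π(·)` varies. -/
def IsNonlinearityInterval (C Cbar : Matrix (Fin n) (Fin n) ℝ)
    (A : Fin m → Matrix (Fin n) (Fin n) ℝ) (b : Fin m → ℝ) (I : Set ℝ) : Prop :=
  I ⊆ interior (Eset C Cbar A b) ∧ IsOpen I ∧ I.OrdConnected ∧
    (∃ a ∈ I, ∃ c ∈ I, a ≠ c) ∧
    (∀ ε ∈ I, ∀ ε' ∈ I, DimsMatch C Cbar A b ε ε') ∧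
    ¬ (∀ ε ∈ I, ∀ ε' ∈ I, SamePartition C Cbar A b ε ε') ∧
    ∀ I' : Set ℝ, I ⊆ I' → I' ⊆ interior (Eset C Cbar A b) → IsOpen I' → I'.OrdConnected →
      (∀ ε ∈ I', ∀ ε' ∈ I', DimsMatch C Cbar A b ε ε') → I' = I

end

namespace Aux4

lemma quad_bound {k : ℕ} (M : Matrix (Fin k) (Fin k) ℝ) :
    ∃ c : ℝ, 0 < c ∧ ∀ x : Fin k → ℝ, |x ⬝ᵥ (M *ᵥ x)| ≤ c * (x ⬝ᵥ x) := by
  refine ⟨(∑ i, ∑ j, |M i j|) + 1, by positivity, fun x => ?_⟩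
  have hx : ∀ i, x i * x i ≤ x ⬝ᵥ x := fun i =>
    Finset.single_le_sum (f := fun i => x i * x i) (fun i _ => mul_self_nonneg _)
      (Finset.mem_univ i)
  have h0 : 0 ≤ x ⬝ᵥ x := Finset.sum_nonneg fun i _ => mul_self_nonneg _
  have h1 : ∀ i j, |x i| * |x j| ≤ x ⬝ᵥ x := by
    intro i j
    have h2 := hx i
    have h3 := hx j
    have h4 := abs_mul_abs_self (x i)
    have h5 := abs_mul_abs_self (x j)
    nlinarith [sq_nonneg (|x i| - |x j|)]
  calc |x ⬝ᵥ (M *ᵥ x)| = |∑ i, ∑ j, x i * (M i j * x j)| := by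
        simp only [dotProduct, mulVec, Finset.mul_sum]
    _ ≤ ∑ i, ∑ j, |x i * (M i j * x j)| :=
        (Finset.abs_sum_le_sum_abs _ _).trans
          (Finset.sum_le_sum fun i _ => Finset.abs_sum_le_sum_abs _ _)
    _ ≤ ∑ i, ∑ j, |M i j| * (x ⬝ᵥ x) := by
        refine Finset.sum_le_sum fun i _ => Finset.sum_le_sum fun j _ => ?_
        rw [abs_mul, abs_mul]
        have := mul_le_mul_of_nonneg_left (h1 i j) (abs_nonneg (M i j))
        linarith
    _ = (∑ i, ∑ j, |M i j|) * (x ⬝ᵥ x) := by simp only [Finset.sum_mul]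
    _ ≤ _ := by nlinarith

lemma isHerm_of_symm {k : ℕ} {M : Matrix (Fin k) (Fin k) ℝ} (h : M.IsSymm) : M.IsHermitian := by
  rw [Matrix.IsHermitian, Matrix.conjTranspose_eq_transpose_of_trivial]; exact h

lemma symm_of_isHerm {k : ℕ} {M : Matrix (Fin k) (Fin k) ℝ} (h : M.IsHermitian) : M.IsSymm := by
  rw [Matrix.IsHermitian, Matrix.conjTranspose_eq_transpose_of_trivial] at h; exact h

lemma psd_iff {k : ℕ} {M : Matrix (Fin k) (Fin k) ℝ} :
    M.PosSemidef ↔ M.IsSymm ∧ ∀ x, 0 ≤ x ⬝ᵥ (M *ᵥ x) := by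
  rw [posSemidef_iff_dotProduct_mulVec]
  simp only [star_trivial]
  exact ⟨fun h => ⟨symm_of_isHerm h.1, h.2⟩, fun h => ⟨isHerm_of_symm h.1, h.2⟩⟩

lemma pd_iff {k : ℕ} {M : Matrix (Fin k) (Fin k) ℝ} :
    M.PosDef ↔ M.IsSymm ∧ ∀ x, x ≠ 0 → 0 < x ⬝ᵥ (M *ᵥ x) := by
  rw [posDef_iff_dotProduct_mulVec]
  simp only [star_trivial]
  exact ⟨fun h => ⟨symm_of_isHerm h.1, h.2⟩, fun h => ⟨isHerm_of_symm h.1, h.2⟩⟩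

lemma psd_factor {k : ℕ} {M : Matrix (Fin k) (Fin k) ℝ} (h : M.PosSemidef) :
    ∃ B : Matrix (Fin k) (Fin k) ℝ, M = Bᵀ * B := by
  open scoped MatrixOrder in
  obtain ⟨B, hB⟩ := CStarAlgebra.nonneg_iff_eq_star_mul_self.mp h.nonneg
  exact ⟨B, by rw [hB, Matrix.star_eq_conjTranspose,
    Matrix.conjTranspose_eq_transpose_of_trivial]⟩

lemma dot_gram {k l : ℕ} (B : Matrix (Fin l) (Fin k) ℝ) (M : Matrix (Fin l) (Fin l) ℝ)
    (x : Fin k → ℝ) :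
    x ⬝ᵥ ((Bᵀ * M * B) *ᵥ x) = (B *ᵥ x) ⬝ᵥ (M *ᵥ (B *ᵥ x)) := by
  rw [← mulVec_mulVec, ← mulVec_mulVec, dotProduct_mulVec x, vecMul_transpose]

lemma pd_dom {k : ℕ} {U M : Matrix (Fin k) (Fin k) ℝ} (hU : U.PosDef) (hM : M.IsSymm) :
    ∃ r : ℝ, 0 < r ∧ (r • U + M).PosSemidef ∧ (r • U - M).PosSemidef := by
  obtain ⟨B, hB⟩ := psd_factor hU.posSemidef
  have hdet : IsUnit B.det := by
    have h1 := hU.det_pos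
    rw [hB, det_mul, det_transpose] at h1
    exact isUnit_iff_ne_zero.mpr fun h => by simp [h] at h1
  obtain ⟨c, hc, hb⟩ := quad_bound ((B⁻¹)ᵀ * M * B⁻¹)
  have key : ∀ x : Fin k → ℝ, |x ⬝ᵥ (M *ᵥ x)| ≤ c * (x ⬝ᵥ (U *ᵥ x)) := by
    intro x
    have h := hb (B *ᵥ x)
    rw [dot_gram, mulVec_mulVec x, nonsing_inv_mul B hdet, one_mulVec] at h
    have h2 := dot_gram B 1 x
    rw [Matrix.mul_one, ← hB, one_mulVec] at h2
    rwa [h2]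
  have hUs := (pd_iff.mp hU).1
  refine ⟨c, hc, psd_iff.mpr ⟨(hUs.smul c).add hM, fun x => ?_⟩,
    psd_iff.mpr ⟨(hUs.smul c).sub hM, fun x => ?_⟩⟩
  · have := neg_abs_le (x ⬝ᵥ (M *ᵥ x))
    have := key x
    simp only [add_mulVec, smul_mulVec, dotProduct_add, dotProduct_smul, smul_eq_mul]
    linarith
  · have := le_abs_self (x ⬝ᵥ (M *ᵥ x))
    have := key x
    simp only [sub_mulVec, smul_mulVec, dotProduct_sub, dotProduct_smul, smul_eq_mul]
    linarith

lemma pd_perturb {k : ℕ} {U M : Matrix (Fin k) (Fin k) ℝ} (hU : U.PosDef) (hM : M.IsSymm) :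
    ∃ δ : ℝ, 0 < δ ∧ ∀ s : ℝ, |s| ≤ δ → (U + s • M).PosDef := by
  obtain ⟨r, hr, h1, h2⟩ := pd_dom hU hM
  refine ⟨1 / (2 * r), by positivity, fun s hs => ?_⟩
  have hs' : |s| * r ≤ 1 / 2 := by
    calc |s| * r ≤ 1 / (2 * r) * r := by gcongr
      _ = 1 / 2 := by field_simp
  have hp : ((1 - |s| * r) • U).PosDef := hU.smul (by linarith)
  rcases abs_cases s with ⟨h, _⟩ | ⟨h, _⟩
  · have := hp.add_posSemidef (h1.smul (abs_nonneg s))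
    rw [h] at this
    convert this using 1
    module
  · have := hp.add_posSemidef (h2.smul (abs_nonneg s))
    rw [h] at this
    convert this using 1
    module

lemma trace_mul_nonneg {k : ℕ} {S X : Matrix (Fin k) (Fin k) ℝ} (hS : S.PosSemidef)
    (hX : X.PosSemidef) : 0 ≤ (S * X).trace := by
  obtain ⟨B, rfl⟩ := psd_factor hS
  rw [Matrix.mul_assoc, Matrix.trace_mul_comm]
  have := (hX.mul_mul_conjTranspose_same B).trace_nonneg
  rwa [Matrix.conjTranspose_eq_transpose_of_trivial] at this

lemma range_le {k : ℕ} {S S' : Matrix (Fin k) (Fin k) ℝ} (hS : S.IsSymm)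
    (hS' : S'.PosSemidef) (c : ℝ) (h : (c • S - S').PosSemidef) :
    LinearMap.range S'.mulVecLin ≤ LinearMap.range S.mulVecLin := by
  have hker : LinearMap.ker S.mulVecLin ≤ LinearMap.ker S'.mulVecLin := by
    intro x hx
    simp only [LinearMap.mem_ker, mulVecLin_apply] at hx ⊢
    have h1 := (psd_iff.mp h).2 x
    have h2 := (psd_iff.mp hS').2 x
    simp only [sub_mulVec, smul_mulVec, dotProduct_sub, dotProduct_smul, hx, smul_eq_mul,
      dotProduct_zero, mul_zero] at h1
    have h3 := (hS'.dotProduct_mulVec_zero_iff x).mp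
    rw [star_trivial] at h3
    exact h3 (by linarith)
  have hrow : ∀ j, ∃ c : Fin k → ℝ, ∑ i, c i • ((LinearMap.proj i : (Fin k → ℝ) →ₗ[ℝ] ℝ).comp
      S.mulVecLin) = (LinearMap.proj j : (Fin k → ℝ) →ₗ[ℝ] ℝ).comp S'.mulVecLin := by
    intro j
    refine (Submodule.mem_span_range_iff_exists_fun ℝ).1 (mem_span_of_iInf_ker_le_ker ?_)
    intro x hx
    have hx0 : x ∈ LinearMap.ker S.mulVecLin := by
      rw [LinearMap.mem_ker]
      funext i
      exact (Submodule.mem_iInf _).mp hx i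
    have h2 := hker hx0
    rw [LinearMap.mem_ker] at h2 ⊢
    rw [LinearMap.comp_apply, h2, map_zero]
  choose H hH using hrow
  have hfac : S' = Matrix.of H * S := by
    rw [← Matrix.mulVec_injective.eq_iff]
    funext x j
    have := congrArg (fun f => f x) (hH j)
    simp only [LinearMap.sum_apply, LinearMap.smul_apply, LinearMap.comp_apply,
      mulVecLin_apply, LinearMap.proj_apply, smul_eq_mul] at this
    rw [← this, ← mulVec_mulVec]
    rfl
  have hfac' : S' = S * (Matrix.of H)ᵀ := by
    conv_lhs => rw [← (psd_iff.mp hS').1, hfac, transpose_mul, hS]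
  rintro _ ⟨x, rfl⟩
  refine ⟨(Matrix.of H)ᵀ *ᵥ x, ?_⟩
  simp only [mulVecLin_apply, mulVec_mulVec]
  rw [← hfac']

lemma ext_beyond {V : Type*} [AddCommGroup V] [Module ℝ V] [TopologicalSpace V]
    [ContinuousAdd V] [ContinuousSMul ℝ V] {s : Set V} {z w : V}
    (hz : z ∈ intrinsicInterior ℝ s) (hw : w ∈ s) :
    ∃ t : ℝ, 0 < t ∧ z + t • (z - w) ∈ s := by
  obtain ⟨⟨z', hz'⟩, hi, rfl⟩ := mem_intrinsicInterior.mp hz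
  have hw' := subset_affineSpan ℝ s hw
  let φ : ℝ → affineSpan ℝ s := fun t => ⟨z' + t • (z' - w), by
    have := AffineMap.lineMap_mem (-t) hz' hw'
    rw [AffineMap.lineMap_apply] at this
    convert this using 1
    simp only [vsub_eq_sub, vadd_eq_add]
    module⟩
  have hφ : Continuous φ := by
    refine Continuous.subtype_mk ?_ _
    fun_prop
  have h0 : φ 0 = ⟨z', hz'⟩ := by
    apply Subtype.ext
    simp [φ]
  have hnb : φ ⁻¹' (interior ((↑) ⁻¹' s)) ∈ nhds (0 : ℝ) :=
    (isOpen_interior.preimage hφ).mem_nhds (by simpa [h0] using hi)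
  obtain ⟨δ, hδ, hb⟩ := Metric.mem_nhds_iff.mp hnb
  refine ⟨δ / 2, by positivity, ?_⟩
  have : δ / 2 ∈ Metric.ball (0 : ℝ) δ := by
    simp [abs_of_pos hδ, hδ]
  have h3 := interior_subset (hb this)
  exact h3

/-- Strong duality with dual attainment, from a strictly feasible primal point. -/
lemma strong_duality {n m : ℕ} {C : Matrix (Fin n) (Fin n) ℝ}
    {A : Fin m → Matrix (Fin n) (Fin n) ℝ} {b : Fin m → ℝ} (hC : C.IsSymm)
    (hA : ∀ i, (A i).IsSymm) {X0 Xb : Matrix (Fin n) (Fin n) ℝ}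
    (h0 : PrimalFeasible A b X0) (h0' : X0.PosDef) (hb : PrimalFeasible A b Xb)
    (hopt : ∀ X', PrimalFeasible A b X' → (C * Xb).trace ≤ (C * X').trace) :
    ∃ (y : Fin m → ℝ) (S : Matrix (Fin n) (Fin n) ℝ), S.IsSymm ∧ (∑ i, y i • A i) + S = C ∧
      S.PosSemidef ∧ (S * Xb).trace = 0 := by
  set p := (C * Xb).trace with hp
  have tr_symm : ∀ (M X : Matrix (Fin n) (Fin n) ℝ), M.IsSymm →
      (M * Xᵀ).trace = (M * X).trace := by
    intro M X hM
    rw [← trace_transpose, transpose_mul, transpose_transpose, hM, trace_mul_comm]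
  let trL : Matrix (Fin n) (Fin n) ℝ → (Matrix (Fin n) (Fin n) ℝ →ₗ[ℝ] ℝ) := fun M =>
    (Matrix.traceLinearMap (Fin n) ℝ ℝ).comp (LinearMap.mulLeft ℝ M)
  have trL_apply : ∀ M X, trL M X = (M * X).trace := fun M X => rfl
  let D : Submodule ℝ (Matrix (Fin n) (Fin n) ℝ × ℝ) :=
    { carrier := {q | ∀ i, (A i * q.1).trace = q.2 * b i}
      zero_mem' := by intro i; simp
      add_mem' := by
        intro q q' h h' i
        simp only [Set.mem_ofPred_eq] at h h'
        simp only [Prod.fst_add, Prod.snd_add, Matrix.mul_add, trace_add, h i, h' i]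
        ring
      smul_mem' := by
        intro c q h i
        simp only [Set.mem_ofPred_eq] at h
        simp only [Prod.smul_fst, Prod.smul_snd, Matrix.mul_smul, trace_smul, h i, smul_eq_mul]
        ring }
  have memD : ∀ q, q ∈ D ↔ ∀ i, (A i * q.1).trace = q.2 * b i := fun q => Iff.rfl
  let ℓ : (Matrix (Fin n) (Fin n) ℝ × ℝ) →ₗ[ℝ] ℝ :=
    (trL C).comp (LinearMap.fst ℝ _ _) - p • LinearMap.snd ℝ _ _
  have hℓ : ∀ q, ℓ q = (C * q.1).trace - p * q.2 := fun q => rfl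
  let K : PointedCone ℝ (Matrix (Fin n) (Fin n) ℝ × ℝ) :=
    { carrier := {q | (q.1 + q.1ᵀ).PosSemidef}
      zero_mem' := by simpa using Matrix.PosSemidef.zero
      add_mem' := by
        intro q q' h h'
        simp only [Set.mem_ofPred_eq] at h h' ⊢
        have := h.add h'
        convert this using 1
        simp only [Prod.fst_add, transpose_add]
        abel
      smul_mem' := by
        intro c q h
        simp only [Set.mem_ofPred_eq] at h ⊢
        have := h.smul c.2
        convert this using 1
        rw [smul_add, ← transpose_smul]
        rfl }
  have memK : ∀ q, q ∈ K ↔ (q.1 + q.1ᵀ).PosSemidef := fun q => Iff.rfl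
  obtain ⟨g, hg1, hg2⟩ := riesz_extension K (ℓ.toPMap D) (by
    rintro ⟨⟨X, t⟩, hD⟩ hK
    rw [memK] at hK
    replace hD := (memD _).mp hD
    simp only at hK hD
    show 0 ≤ ℓ (X, t)
    rw [hℓ]
    simp only
    have hYt : ∀ M : Matrix (Fin n) (Fin n) ℝ, M.IsSymm →
        (M * ((1 / 2 : ℝ) • (X + Xᵀ))).trace = (M * X).trace := by
      intro M hM
      rw [Matrix.mul_smul, Matrix.mul_add, trace_smul, trace_add, tr_symm M X hM, smul_eq_mul]
      ring
    have hYp : ((1 / 2 : ℝ) • (X + Xᵀ)).PosSemidef := hK.smul (by norm_num)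
    have hs1 : 0 ≤ |t| + 1 := by positivity
    have hs2 : 0 < t + (|t| + 1) := by linarith [neg_abs_le t]
    have hZp := (hYp.add (hb.2.2.smul hs1)).smul (inv_nonneg.mpr hs2.le)
    have hZ := hopt _ ⟨(psd_iff.mp hZp).1, fun i => by
      rw [Matrix.mul_smul, Matrix.mul_add, trace_smul, trace_add, hYt _ (hA i), hD i,
        Matrix.mul_smul, trace_smul, hb.2.1 i, smul_eq_mul, smul_eq_mul]
      field_simp, hZp⟩
    rw [Matrix.mul_smul, Matrix.mul_add, trace_smul, trace_add, hYt _ hC,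
        Matrix.mul_smul, trace_smul, ← hp, smul_eq_mul, smul_eq_mul,
        inv_mul_eq_div, le_div_iff₀ hs2] at hZ
    linarith) (by
    rintro ⟨Y, t⟩
    have hYs : (Y + Yᵀ).IsSymm := by
      rw [Matrix.IsSymm, transpose_add, transpose_transpose, add_comm]
    obtain ⟨r, hr, h1, -⟩ := pd_dom h0' hYs
    refine ⟨⟨((r / 2) • X0, r / 2), ?_⟩, ?_⟩
    · show _ ∈ D
      rw [memD]
      intro i
      simp only [Matrix.mul_smul, trace_smul, h0.2.1 i, smul_eq_mul]
    · rw [memK]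
      convert h1 using 1
      simp only [Prod.mk_add_mk, transpose_add, transpose_smul]
      rw [h0.1]
      module)
  have hg0 : ∀ t : ℝ, g (0, t) = 0 := by
    have hnn : ∀ t : ℝ, 0 ≤ g (0, t) := fun t => hg2 _ (by
      rw [memK]; simpa using Matrix.PosSemidef.zero)
    intro t
    have h1 := hnn t
    have h2 := hnn (-t)
    have : ((0 : Matrix (Fin n) (Fin n) ℝ), -t) = -(0, t) := by simp
    rw [this, map_neg] at h2
    linarith
  let g' : Matrix (Fin n) (Fin n) ℝ →ₗ[ℝ] ℝ := g.comp (LinearMap.inl ℝ _ _)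
  have hg' : ∀ X t, g (X, t) = g' X := by
    intro X t
    have : ((X, t) : Matrix (Fin n) (Fin n) ℝ × ℝ) = (X, 0) + (0, t) := by simp
    rw [this, map_add, hg0, add_zero]
    rfl
  have hg'D : ∀ X t, (∀ i, (A i * X).trace = t * b i) → g' X = (C * X).trace - p * t := by
    intro X t h
    rw [← hg' X t]
    exact hg1 ⟨(X, t), h⟩
  have hspan : trL C - g' ∈ Submodule.span ℝ (Set.range fun i => trL (A i)) := by
    refine mem_span_of_iInf_ker_le_ker ?_
    intro X hX
    have hX' : ∀ i, (A i * X).trace = 0 * b i := by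
      intro i
      rw [zero_mul]
      exact (Submodule.mem_iInf _).mp hX i
    rw [LinearMap.mem_ker, LinearMap.sub_apply, hg'D X 0 hX', trL_apply]
    ring
  obtain ⟨y, hy⟩ := (Submodule.mem_span_range_iff_exists_fun ℝ).1 hspan
  have hS : ∀ X, ((C - ∑ i, y i • A i) * X).trace = g' X := by
    intro X
    have := congrArg (fun f => f X) hy
    simp only [LinearMap.sum_apply, LinearMap.smul_apply, LinearMap.sub_apply, trL_apply,
      smul_eq_mul] at this
    rw [Matrix.sub_mul, trace_sub, Matrix.sum_mul, trace_sum]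
    simp only [Matrix.smul_mul, trace_smul, smul_eq_mul]
    linarith
  have hSs : (C - ∑ i, y i • A i).IsSymm := by
    rw [Matrix.IsSymm, transpose_sub, transpose_sum, hC]
    simp only [transpose_smul, fun i => show (A i)ᵀ = A i from hA i]
  refine ⟨y, C - ∑ i, y i • A i, hSs, by abel, psd_iff.mpr ⟨hSs, fun x => ?_⟩, ?_⟩
  · have h1 := hS (vecMulVec x x)
    rw [Matrix.mul_vecMulVec, trace_vecMulVec, dotProduct_comm] at h1
    rw [h1, ← hg' _ 0]
    apply hg2
    rw [memK]
    have hxx : (vecMulVec x x).PosSemidef := by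
      have := Matrix.posSemidef_vecMulVec_self_star x
      rwa [star_trivial] at this
    exact hxx.add hxx.transpose
  · rw [hS, hg'D Xb 1 (fun i => by rw [hb.2.1 i, one_mul]), ← hp]
    ring

lemma gap {n m : ℕ} {C Cbar : Matrix (Fin n) (Fin n) ℝ}
    {A : Fin m → Matrix (Fin n) (Fin n) ℝ} {b : Fin m → ℝ} {ε : ℝ}
    {X : Matrix (Fin n) (Fin n) ℝ} (hX : PrimalFeasible A b X) {y : Fin m → ℝ}
    {S : Matrix (Fin n) (Fin n) ℝ} (h : DualFeasible C Cbar A ε y S) :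
    ((C + ε • Cbar) * X).trace = (∑ i, b i * y i) + (S * X).trace := by
  rw [← h.2.1, Matrix.add_mul, trace_add, Matrix.sum_mul, trace_sum]
  congr 1
  refine Finset.sum_congr rfl fun i _ => ?_
  rw [Matrix.smul_mul, trace_smul, hX.2.1 i, smul_eq_mul, mul_comm]

lemma combo {n m : ℕ} {C Cbar : Matrix (Fin n) (Fin n) ℝ}
    {A : Fin m → Matrix (Fin n) (Fin n) ℝ} {ε ε' : ℝ} {y y' : Fin m → ℝ}
    {S S' : Matrix (Fin n) (Fin n) ℝ} (h : (∑ i, y i • A i) + S = C + ε • Cbar)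
    (h' : (∑ i, y' i • A i) + S' = C + ε' • Cbar) {u v : ℝ} (huv : u + v = 1) :
    (∑ i, (u • y + v • y') i • A i) + (u • S + v • S') = C + (u * ε + v * ε') • Cbar := by
  have e1 : C + (u * ε + v * ε') • Cbar = u • (C + ε • Cbar) + v • (C + ε' • Cbar) := by
    have : C = u • C + v • C := by rw [← add_smul, huv, one_smul]
    nth_rewrite 1 [this]
    module
  rw [e1, ← h, ← h']
  simp only [Pi.add_apply, Pi.smul_apply, smul_eq_mul, add_smul,
    Finset.sum_add_distrib, smul_add, Finset.smul_sum, mul_smul]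
  abel

lemma dualOpt_convex {n m : ℕ} (C Cbar : Matrix (Fin n) (Fin n) ℝ)
    (A : Fin m → Matrix (Fin n) (Fin n) ℝ) (b : Fin m → ℝ) (ε : ℝ) :
    Convex ℝ (DualOpt C Cbar A b ε) := by
  rintro ⟨y, S⟩ ⟨⟨h1, h2, h3⟩, h4⟩ ⟨y', S'⟩ ⟨⟨h1', h2', h3'⟩, h4'⟩ u v hu hv huv
  have hps := (h3.smul hu).add (h3'.smul hv)
  refine ⟨⟨(psd_iff.mp hps).1, ?_, hps⟩, fun y'' S'' hf => ?_⟩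
  · have := combo h2 h2' huv
    rwa [← add_mul, huv, one_mul] at this
  · have e1 := h4 y'' S'' hf
    have e2 := h4' y'' S'' hf
    simp only [Prod.smul_mk, Prod.mk_add_mk, Pi.add_apply, Pi.smul_apply, smul_eq_mul, mul_add,
      Finset.sum_add_distrib] at e1 e2 ⊢
    have a1 : ∑ i, b i * (u * y i) = u * ∑ i, b i * y i := by
      rw [Finset.mul_sum]; exact Finset.sum_congr rfl fun i _ => by ring
    have a2 : ∑ i, b i * (v * y' i) = v * ∑ i, b i * y' i := by
      rw [Finset.mul_sum]; exact Finset.sum_congr rfl fun i _ => by ring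
    rw [a1, a2]
    have : ∑ i, b i * y'' i = u * ∑ i, b i * y'' i + v * ∑ i, b i * y'' i := by
      rw [← add_mul, huv, one_mul]
    nlinarith [mul_le_mul_of_nonneg_left e1 hu, mul_le_mul_of_nonneg_left e2 hv]

lemma dualOpt_relint_nonempty {n m : ℕ} (C Cbar : Matrix (Fin n) (Fin n) ℝ)
    (A : Fin m → Matrix (Fin n) (Fin n) ℝ) (b : Fin m → ℝ) (ε : ℝ)
    (h : (DualOpt C Cbar A b ε).Nonempty) :
    (intrinsicInterior ℝ (DualOpt C Cbar A b ε)).Nonempty :=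
  Set.Nonempty.intrinsicInterior (V := (Fin m → ℝ) × (Fin n → Fin n → ℝ))
    (dualOpt_convex C Cbar A b ε) h

/-- A relative interior dual solution has maximal range. -/
lemma relint_range {n m : ℕ} {C Cbar : Matrix (Fin n) (Fin n) ℝ}
    {A : Fin m → Matrix (Fin n) (Fin n) ℝ} {b : Fin m → ℝ} {ε : ℝ}
    {y y' : Fin m → ℝ} {S S' : Matrix (Fin n) (Fin n) ℝ}
    (h : (y, S) ∈ intrinsicInterior ℝ (DualOpt C Cbar A b ε))
    (h' : (y', S') ∈ DualOpt C Cbar A b ε) :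
    LinearMap.range S'.mulVecLin ≤ LinearMap.range S.mulVecLin := by
  obtain ⟨t, ht, hm⟩ := ext_beyond h h'
  have hS := (intrinsicInterior_subset h).1.1
  refine range_le hS h'.1.2.2 (t⁻¹ + 1) ?_
  have := hm.1.2.2.smul (inv_nonneg.mpr ht.le)
  convert this using 1
  simp only [Prod.snd_add, Prod.smul_snd, Prod.snd_sub]
  rw [smul_add, smul_smul, inv_mul_cancel₀ ht.ne']
  module

lemma exists_core {n k : ℕ} {S : Matrix (Fin n) (Fin n) ℝ} {Q : Matrix (Fin n) (Fin k) ℝ}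
    (hS : S.PosSemidef) (hQ : Qᵀ * Q = 1)
    (hr : LinearMap.range Q.mulVecLin = LinearMap.range S.mulVecLin) :
    ∃ U : Matrix (Fin k) (Fin k) ℝ, U.PosDef ∧ S = Q * U * Qᵀ := by
  have hSs := (psd_iff.mp hS).1
  have hPS : Q * Qᵀ * S = S := by
    rw [← Matrix.mulVec_injective.eq_iff]
    funext x
    have : S *ᵥ x ∈ LinearMap.range Q.mulVecLin := hr ▸ ⟨x, rfl⟩
    obtain ⟨z, hz⟩ := this
    rw [mulVecLin_apply] at hz
    rw [← mulVec_mulVec, ← hz, mulVec_mulVec, Matrix.mul_assoc, hQ, Matrix.mul_one]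
  have hSP : S * (Q * Qᵀ) = S := by
    have := congrArg Matrix.transpose hPS
    rwa [transpose_mul, transpose_mul, transpose_transpose, hSs] at this
  have hU : (Qᵀ * S * Q).PosSemidef := by
    have := hS.conjTranspose_mul_mul_same Q
    rwa [Matrix.conjTranspose_eq_transpose_of_trivial] at this
  refine ⟨Qᵀ * S * Q, pd_iff.mpr ⟨(psd_iff.mp hU).1, fun x hx => ?_⟩, ?_⟩
  · refine lt_of_le_of_ne ((psd_iff.mp hU).2 x) fun h => hx ?_
    rw [dot_gram] at h
    have h3 := (hS.dotProduct_mulVec_zero_iff (Q *ᵥ x)).mp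
    rw [star_trivial] at h3
    have h4 := h3 h.symm
    have : Q *ᵥ x ∈ LinearMap.range S.mulVecLin := hr ▸ ⟨x, rfl⟩
    obtain ⟨w, hw⟩ := this
    rw [mulVecLin_apply] at hw
    have h5 : (S *ᵥ w) ⬝ᵥ (S *ᵥ w) = 0 := by
      have := dot_gram S 1 w
      rw [Matrix.mul_one, one_mulVec, hSs, ← mulVec_mulVec, hw, h4, dotProduct_zero] at this
      rw [hw]; exact this.symm
    have h6 : Q *ᵥ x = 0 := hw ▸ dotProduct_self_eq_zero.mp h5
    have h7 : (Qᵀ * Q) *ᵥ x = 0 := by rw [← mulVec_mulVec, h6, mulVec_zero]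
    rwa [hQ, one_mulVec] at h7
  · calc S = (Q * Qᵀ) * (S * (Q * Qᵀ)) := by rw [hSP, hPS]
      _ = _ := by simp only [Matrix.mul_assoc]

lemma core_psd {n k : ℕ} {U : Matrix (Fin k) (Fin k) ℝ} (Q : Matrix (Fin n) (Fin k) ℝ)
    (hU : U.PosSemidef) : (Q * U * Qᵀ).PosSemidef := by
  have := hU.mul_mul_conjTranspose_same Q
  rwa [Matrix.conjTranspose_eq_transpose_of_trivial] at this

lemma core_range {n k : ℕ} {U : Matrix (Fin k) (Fin k) ℝ} {Q : Matrix (Fin n) (Fin k) ℝ}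
    (hU : U.PosDef) (hQ : Qᵀ * Q = 1) :
    LinearMap.range Q.mulVecLin ≤ LinearMap.range (Q * U * Qᵀ).mulVecLin := by
  rintro _ ⟨z, rfl⟩
  refine ⟨Q *ᵥ (U⁻¹ *ᵥ z), ?_⟩
  have hd : IsUnit U.det := isUnit_iff_ne_zero.mpr hU.det_pos.ne'
  simp only [mulVecLin_apply, mulVec_mulVec]
  congr 1
  calc Q * U * Qᵀ * (Q * U⁻¹) = Q * U * (Qᵀ * Q) * U⁻¹ := by simp only [Matrix.mul_assoc]
    _ = Q := by rw [hQ, Matrix.mul_one, Matrix.mul_assoc, mul_nonsing_inv _ hd, Matrix.mul_one]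

/-- If `U ≻ 0`, complementarity with `Q U Qᵀ` implies complementarity with `Q U' Qᵀ`. -/
lemma core_compl {n k : ℕ} {U U' : Matrix (Fin k) (Fin k) ℝ} {Q : Matrix (Fin n) (Fin k) ℝ}
    (hU : U.PosDef) (hU' : U'.PosDef) {X : Matrix (Fin n) (Fin n) ℝ} (hX : X.PosSemidef)
    (h : (Q * U * Qᵀ * X).trace = 0) : (Q * U' * Qᵀ * X).trace = 0 := by
  obtain ⟨r, -, -, h2⟩ := pd_dom hU (pd_iff.mp hU').1
  have h3 := trace_mul_nonneg (core_psd Q h2) hX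
  have h4 := trace_mul_nonneg (core_psd Q hU'.posSemidef) hX
  rw [Matrix.mul_sub, Matrix.sub_mul, Matrix.sub_mul, trace_sub, Matrix.mul_smul,
    Matrix.smul_mul, Matrix.smul_mul, trace_smul, h, smul_zero] at h3
  linarith

lemma opt_of_compl {n m : ℕ} {C Cbar : Matrix (Fin n) (Fin n) ℝ}
    {A : Fin m → Matrix (Fin n) (Fin n) ℝ} {b : Fin m → ℝ} {ε : ℝ}
    {X : Matrix (Fin n) (Fin n) ℝ} (hX : PrimalFeasible A b X) {y : Fin m → ℝ}
    {S : Matrix (Fin n) (Fin n) ℝ} (h : DualFeasible C Cbar A ε y S)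
    (hc : (S * X).trace = 0) :
    X ∈ PrimalOpt C Cbar A b ε ∧ (y, S) ∈ DualOpt C Cbar A b ε := by
  refine ⟨⟨hX, fun X' hX' => ?_⟩, ⟨h, fun y' S' h' => ?_⟩⟩
  · have := trace_mul_nonneg h.2.2 hX'.2.2
    rw [gap hX h, gap hX' h]
    linarith
  · have := trace_mul_nonneg h'.2.2 hX.2.2
    have e1 := gap hX h
    have e2 := gap hX h'
    show _ ≤ ∑ i, b i * y i
    linarith

lemma compl_of_opt {n m : ℕ} {C Cbar : Matrix (Fin n) (Fin n) ℝ}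
    {A : Fin m → Matrix (Fin n) (Fin n) ℝ} {b : Fin m → ℝ} {ε : ℝ}
    {X X' : Matrix (Fin n) (Fin n) ℝ} (hX : PrimalFeasible A b X) {y y' : Fin m → ℝ}
    {S S' : Matrix (Fin n) (Fin n) ℝ} (h : DualFeasible C Cbar A ε y S)
    (hc : (S * X).trace = 0) (hX' : X' ∈ PrimalOpt C Cbar A b ε)
    (h' : (y', S') ∈ DualOpt C Cbar A b ε) : (S' * X').trace = 0 := by
  have e1 := gap hX h
  have e2 := gap hX'.1 h'.1
  have e3 := hX'.2 X hX
  have e4 := h'.2 y S h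
  have := trace_mul_nonneg h'.1.2.2 hX'.1.2.2
  simp only at e2 e4 this
  linarith

lemma mem_E {n m : ℕ} {C Cbar : Matrix (Fin n) (Fin n) ℝ}
    {A : Fin m → Matrix (Fin n) (Fin n) ℝ} {b : Fin m → ℝ} {ε : ℝ} {y : Fin m → ℝ}
    {S : Matrix (Fin n) (Fin n) ℝ} (h : DualFeasible C Cbar A ε y S) :
    ε ∈ Eset C Cbar A b := by
  have : ((∑ i, b i * y i : ℝ) : EReal) ≤ vfun C Cbar A b ε := by
    refine le_sInf ?_
    rintro _ ⟨X, hX, rfl⟩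
    have e := gap hX h
    have := trace_mul_nonneg h.2.2 hX.2.2
    exact EReal.coe_le_coe_iff.mpr (by linarith)
  exact lt_of_lt_of_le (EReal.bot_lt_coe _) this

lemma feas_core {n m k : ℕ} {C Cbar : Matrix (Fin n) (Fin n) ℝ}
    {A : Fin m → Matrix (Fin n) (Fin n) ℝ} {ε : ℝ} {y : Fin m → ℝ}
    {U : Matrix (Fin k) (Fin k) ℝ} {Q : Matrix (Fin n) (Fin k) ℝ} (hU : U.PosDef)
    (h : (∑ i, y i • A i) + Q * U * Qᵀ = C + ε • Cbar) :
    DualFeasible C Cbar A ε y (Q * U * Qᵀ) :=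
  ⟨(psd_iff.mp (core_psd Q hU.posSemidef)).1, h, core_psd Q hU.posSemidef⟩

lemma set_eq {n m : ℕ} (C Cbar : Matrix (Fin n) (Fin n) ℝ)
    (A : Fin m → Matrix (Fin n) (Fin n) ℝ) (b : Fin m → ℝ)
    (hSA : StandingAssumptions C Cbar A b)
    (εbar : ℝ) (hεbar : εbar ∈ interior (Eset C Cbar A b))
    (Xb Sb : Matrix (Fin n) (Fin n) ℝ) (yb : Fin m → ℝ)
    (hmc : MaxComp C Cbar A b εbar Xb yb Sb)
    (kN : ℕ) (QN : Matrix (Fin n) (Fin kN) ℝ)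
    (hQNorth : QNᵀ * QN = 1)
    (hQNrange : LinearMap.range QN.mulVecLin = LinearMap.range Sb.mulVecLin) :
    {ε : ℝ | ∃ (y : Fin m → ℝ) (US : Matrix (Fin kN) (Fin kN) ℝ), US.PosDef ∧
          (∑ i, y i • A i) + QN * US * QNᵀ = C + ε • Cbar} = InvSet C Cbar A b εbar := by
  obtain ⟨hC, hCb, hA, -, X0, -, -, hX0, hX0', -, -⟩ := hSA
  obtain ⟨hXbI, hSbI⟩ := hmc
  have hXb := intrinsicInterior_subset hXbI
  have hSb := intrinsicInterior_subset hSbI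
  -- complementarity at `εbar`
  have hcompl : (Sb * Xb).trace = 0 := by
    obtain ⟨y, S, h1, h2, h3, h4⟩ :=
      strong_duality (hC.add (hCb.smul εbar)) hA hX0 hX0' hXb.1 hXb.2
    exact compl_of_opt hXb.1 ⟨h1, h2, h3⟩ h4 hXb hSb
  obtain ⟨Ub, hUb, hSbU⟩ := exists_core hSb.1.2.2 hQNorth hQNrange
  simp only at hSbU
  subst hSbU
  have hbeq : (∑ i, yb i • A i) + QN * Ub * QNᵀ = C + εbar • Cbar := hSb.1.2.1
  ext ε
  constructor
  · rintro ⟨y, U, hU, hyU⟩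
    have hUU : (U - Ub).IsSymm := (pd_iff.mp hU).1.sub (pd_iff.mp hUb).1
    -- affine extension along the segment from `εbar` to `ε`
    have hline : ∀ s : ℝ, (∑ i, ((1 + s) • y + (-s) • yb) i • A i) +
        QN * (U + s • (U - Ub)) * QNᵀ = C + (ε + s * (ε - εbar)) • Cbar := by
      intro s
      have := combo hyU hbeq (show (1 + s) + (-s) = 1 by ring)
      convert this using 2
      · have e : U + s • (U - Ub) = (1 + s) • U + (-s) • Ub := by module
        rw [e, Matrix.mul_add, Matrix.add_mul]
        simp only [Matrix.mul_smul, Matrix.smul_mul]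
      · congr 1
        ring
    have hf := feas_core hU hyU
    have hc : (QN * U * QNᵀ * Xb).trace = 0 := core_compl hUb hU hXb.1.2.2 hcompl
    obtain ⟨hXbε, hSε⟩ := opt_of_compl hXb.1 hf hc
    -- `ε` is an interior point of `E`
    have hint : ε ∈ interior (Eset C Cbar A b) := by
      by_cases hne : ε = εbar
      · rw [hne]; exact hεbar
      obtain ⟨δ, hδ, hp⟩ := pd_perturb hU hUU
      have hne' : 0 < |ε - εbar| := abs_pos.mpr (sub_ne_zero.mpr hne)
      rw [mem_interior_iff_mem_nhds, Metric.mem_nhds_iff]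
      refine ⟨δ * |ε - εbar|, by positivity, fun x hx => ?_⟩
      rw [Metric.mem_ball, Real.dist_eq] at hx
      have hs : |(x - ε) / (ε - εbar)| ≤ δ := by
        rw [abs_div, div_le_iff₀ hne']
        exact hx.le
      have h1 := feas_core (hp _ hs) (hline _)
      rw [div_mul_cancel₀ _ (sub_ne_zero.mpr hne), add_sub_cancel] at h1
      exact mem_E h1
    -- the primal optimal sets coincide
    have hP : PrimalOpt C Cbar A b ε = PrimalOpt C Cbar A b εbar := by
      ext X
      constructor
      · intro hX
        have h1 := compl_of_opt hXb.1 hf hc hX hSε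
        exact (opt_of_compl hX.1 hSb.1 (core_compl hU hUb hX.1.2.2 h1)).1
      · intro hX
        have h1 := compl_of_opt hXb.1 hSb.1 hcompl hX hSb
        exact (opt_of_compl hX.1 hf (core_compl hUb hU hX.1.2.2 h1)).1
    obtain ⟨⟨y1, S1⟩, h1⟩ := dualOpt_relint_nonempty C Cbar A b ε ⟨_, hSε⟩
    have h1' := intrinsicInterior_subset h1
    have hc1 := compl_of_opt hXb.1 hf hc hXbε h1'
    refine ⟨hint, Xb, y1, S1, Xb, yb, _, ⟨hP ▸ hXbI, h1⟩, ⟨hXbI, hSbI⟩, rfl, le_antisymm ?_ ?_⟩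
    · -- a point of the auxiliary set on the other side of `εbar`
      obtain ⟨δ, hδ, hp⟩ := pd_perturb hUb hUU
      have hpd : (Ub + (-δ) • (U - Ub)).PosDef := hp _ (by rw [abs_neg, abs_of_pos hδ])
      have h2 := hline (-1 - δ)
      have e2 : U + (-1 - δ) • (U - Ub) = Ub + (-δ) • (U - Ub) := by module
      rw [e2] at h2
      have h1δ : 0 < 1 + δ := by linarith
      have hu : δ / (1 + δ) + 1 / (1 + δ) = 1 := by field_simp; ring
      have h3 := combo h1'.1.2.1 h2 hu
      have e3 : δ / (1 + δ) * ε + 1 / (1 + δ) * (ε + (-1 - δ) * (ε - εbar)) = εbar := by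
        field_simp; ring
      rw [e3] at h3
      have hT := core_psd QN hpd.posSemidef
      have hu0 : 0 ≤ δ / (1 + δ) := by positivity
      have hv0 : 0 ≤ 1 / (1 + δ) := by positivity
      have hps := (h1'.1.2.2.smul hu0).add (hT.smul hv0)
      have hc2 := core_compl hUb hpd hXb.1.2.2 hcompl
      have hopt := (opt_of_compl hXb.1 ⟨(psd_iff.mp hps).1, h3, hps⟩ (by
        rw [Matrix.add_mul, trace_add, Matrix.smul_mul, Matrix.smul_mul, trace_smul, trace_smul,
          hc1, hc2, smul_zero, smul_zero, add_zero])).2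
      refine le_trans ?_ (relint_range hSbI hopt)
      refine range_le (psd_iff.mp hps).1 h1'.1.2.2 ((1 + δ) / δ) ?_
      have hps2 := hT.smul (show (0 : ℝ) ≤ 1 / δ by positivity)
      convert hps2 using 1
      rw [smul_add, smul_smul, smul_smul]
      have e4 : (1 + δ) / δ * (δ / (1 + δ)) = 1 := by field_simp
      have e5 : (1 + δ) / δ * (1 / (1 + δ)) = 1 / δ := by field_simp
      rw [e4, e5, one_smul, add_sub_cancel_left]
    · rw [← hQNrange]
      exact (core_range hU hQNorth).trans (relint_range h1 hSε)
  · rintro ⟨-, X, y, S, X', y', S', ⟨-, hS⟩, ⟨-, hS'⟩, -, hr⟩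
    have hS0 := intrinsicInterior_subset hS
    have e1 : LinearMap.range S'.mulVecLin = LinearMap.range QN.mulVecLin := by
      rw [hQNrange]
      exact le_antisymm (relint_range hSbI (intrinsicInterior_subset hS'))
        (relint_range hS' hSb)
    obtain ⟨U, hU, hSU⟩ := exists_core hS0.1.2.2 hQNorth (e1.symm.trans hr.symm)
    refine ⟨y, U, hU, ?_⟩
    rw [← hSU]
    exact hS0.1.2.1

end Aux4

/-- the boundary points of a bounded invariancy set are obtained from the
auxiliary problems `inf`/`sup` of `ε` over the dual auxiliary system. -/
theorem stmt4 {n m : ℕ} (C Cbar : Matrix (Fin n) (Fin n) ℝ)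
    (A : Fin m → Matrix (Fin n) (Fin n) ℝ) (b : Fin m → ℝ)
    (hSA : StandingAssumptions C Cbar A b)
    (εbar : ℝ) (hεbar : εbar ∈ interior (Eset C Cbar A b))
    (Xb Sb : Matrix (Fin n) (Fin n) ℝ) (yb : Fin m → ℝ)
    (hmc : MaxComp C Cbar A b εbar Xb yb Sb)
    (kN : ℕ) (QN : Matrix (Fin n) (Fin kN) ℝ)
    (hQNorth : QNᵀ * QN = 1)
    (hQNrange : LinearMap.range QN.mulVecLin = LinearMap.range Sb.mulVecLin)
    (hbdd : Bornology.IsBounded (InvSet C Cbar A b εbar)) :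
    sInf {ε : ℝ | ∃ (y : Fin m → ℝ) (US : Matrix (Fin kN) (Fin kN) ℝ), US.PosDef ∧
          (∑ i, y i • A i) + QN * US * QNᵀ = C + ε • Cbar} =
        sInf (InvSet C Cbar A b εbar) ∧
      sSup {ε : ℝ | ∃ (y : Fin m → ℝ) (US : Matrix (Fin kN) (Fin kN) ℝ), US.PosDef ∧
          (∑ i, y i • A i) + QN * US * QNᵀ = C + ε • Cbar} =
        sSup (InvSet C Cbar A b εbar) := by
  rw [Aux4.set_eq C Cbar A b hSA εbar hεbar Xb Sb yb hmc kN QN hQNorth hQNrange]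
  exact ⟨rfl, rfl⟩
end

section
/- Let ε̄ ∈ int(E). Suppose that for every sequence {ε_k} ⊆ int(E) with ε_k → ε̄ there exists a sequence of optimal solutions (X(ε_k), y(ε_k), S(ε_k)) of (P_{ε_k}) and (D_{ε_k}) converging to some strictly complementary optimal solution (X*(ε̄), y*(ε̄), S*(ε̄)) of (P_{ε̄}) and (D_{ε̄}). Then there exists ξ > 0 with (ε̄−ξ, ε̄+ξ) ⊆ int(E) such that for every ε ∈ (ε̄−ξ, ε̄+ξ) the problems (P_ε) and (D_ε) admit a strictly complementary optimal solution and dim B(ε) = dim B(ε̄) and dim N(ε) = dim N(ε̄); in particular ε̄ belongs to an open interval on which dim B(·) and dim N(·) are constant. -/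
open Matrix Set

lemma aux_scale {w a : ℝ} (h : ∀ t : ℝ, 0 < t → w ≤ t * a) : w ≤ 0 ∧ 0 ≤ a := by
  constructor
  · by_contra hw
    push Not at hw
    have h1 := h (w / (2 * (|a| + 1))) (by positivity)
    have h2 : w / (2 * (|a| + 1)) * a ≤ w / (2 * (|a| + 1)) * (|a| + 1) := by
      apply mul_le_mul_of_nonneg_left _ (by positivity)
      linarith [le_abs_self a]
    have h3 : w / (2 * (|a| + 1)) * (|a| + 1) = w / 2 := by
      have : |a| + 1 ≠ 0 := by positivity
      field_simp
    linarith
  · by_contra ha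
    push Not at ha
    have h1 := h ((|w| + 1) / (-a)) (div_pos (by positivity) (by linarith))
    have h3 : (|w| + 1) / (-a) * a = -(|w| + 1) := by
      have : a ≠ 0 := ha.ne
      field_simp
    linarith [neg_abs_le w]

open scoped MatrixOrder ComplexOrder in
lemma aux_trace {n : ℕ} {X S : Matrix (Fin n) (Fin n) ℝ} (hX : X.PosSemidef)
    (hS : S.PosSemidef) : 0 ≤ (S * X).trace ∧ ((S * X).trace = 0 → X * S = 0) := by
  obtain ⟨B, rfl⟩ := CStarAlgebra.nonneg_iff_eq_star_mul_self.mp hX.nonneg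
  obtain ⟨D, rfl⟩ := CStarAlgebra.nonneg_iff_eq_star_mul_self.mp hS.nonneg
  simp only [Matrix.star_eq_conjTranspose]
  have h : (Dᴴ * D * (Bᴴ * B)).trace = ((B * Dᴴ) * (B * Dᴴ)ᴴ).trace := by
    rw [Matrix.trace_mul_comm, ← Matrix.mul_assoc, Matrix.trace_mul_comm]
    simp [Matrix.mul_assoc]
    rw [← Matrix.mul_assoc, Matrix.trace_mul_comm]
    simp [Matrix.mul_assoc]
  rw [h]
  refine ⟨(Matrix.posSemidef_self_mul_conjTranspose _).trace_nonneg, fun h0 => ?_⟩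
  rw [Matrix.trace_mul_conjTranspose_self_eq_zero_iff] at h0
  rw [Matrix.mul_assoc, ← Matrix.mul_assoc B, h0]
  simp

/-- Matrices with positive definite symmetric part. -/
def symPosDef (n : ℕ) : Set (Matrix (Fin n) (Fin n) ℝ) :=
  {M | ∀ x : Fin n → ℝ, x ≠ 0 → 0 < x ⬝ᵥ (M *ᵥ x)}

lemma symPosDef_convex (n : ℕ) : Convex ℝ (symPosDef n) := by
  intro M hM N hN a c ha hc hac x hx
  have h1 := hM x hx
  have h2 := hN x hx
  simp only [Matrix.add_mulVec, Matrix.smul_mulVec, dotProduct_add, dotProduct_smul, smul_eq_mul]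
  rcases ha.lt_or_eq with h | h
  · have := mul_pos h h1
    have := mul_nonneg hc h2.le
    linarith
  · subst h
    have : c = 1 := by linarith
    subst this
    simpa using h2

lemma symPosDef_smul {n : ℕ} {M : Matrix (Fin n) (Fin n) ℝ} (hM : M ∈ symPosDef n) {t : ℝ}
    (ht : 0 < t) : t • M ∈ symPosDef n := by
  intro x hx
  have := mul_pos ht (hM x hx)
  simpa [Matrix.smul_mulVec, dotProduct_smul] using this

lemma symPosDef_of_posDef {n : ℕ} {M : Matrix (Fin n) (Fin n) ℝ} (hM : M.PosDef) :
    M ∈ symPosDef n := by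
  intro x hx
  simpa using hM.dotProduct_mulVec_pos hx

lemma symPosDef_open (n : ℕ) : IsOpen (symPosDef n) := by
  have key : symPosDef n = {M | ∀ x ∈ Metric.sphere (0 : Fin n → ℝ) 1, 0 < x ⬝ᵥ (M *ᵥ x)} := by
    ext M
    constructor
    · intro h x hx
      apply h x
      rintro rfl
      simp at hx
    · intro h x hx
      have hn : 0 < ‖x‖ := norm_pos_iff.mpr hx
      have := h (‖x‖⁻¹ • x) (by simp [norm_smul, hn.ne'])
      simp only [Matrix.mulVec_smul, dotProduct_smul, smul_dotProduct, smul_eq_mul] at this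
      have hi : 0 < ‖x‖⁻¹ := inv_pos.mpr hn
      exact pos_of_mul_pos_right (pos_of_mul_pos_right this hi.le) hi.le
  rw [key, isOpen_iff_mem_nhds]
  intro M hM
  refine (isCompact_sphere (0 : Fin n → ℝ) 1).eventually_forall_of_forall_eventually ?_
  intro y hy
  have hc : Continuous fun z : Matrix (Fin n) (Fin n) ℝ × (Fin n → ℝ) => z.2 ⬝ᵥ (z.1 *ᵥ z.2) := by
    fun_prop
  exact hc.continuousAt.eventually (lt_mem_nhds (hM y hy))

/-- The constraint map. -/
def conMap {n m : ℕ} (A : Fin m → Matrix (Fin n) (Fin n) ℝ) :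
    Matrix (Fin n) (Fin n) ℝ →ₗ[ℝ] (Fin m → ℝ) :=
  LinearMap.pi fun i => (Matrix.traceLinearMap (Fin n) ℝ ℝ).comp (LinearMap.mulLeft ℝ (A i))

lemma conMap_apply {n m : ℕ} (A : Fin m → Matrix (Fin n) (Fin n) ℝ)
    (M : Matrix (Fin n) (Fin n) ℝ) (i : Fin m) : conMap A M i = (A i * M).trace := rfl

lemma fun_repr {m : ℕ} (f : (Fin m → ℝ) →ₗ[ℝ] ℝ) (z : Fin m → ℝ) :
    f z = ∑ i, f (Pi.single i 1) * z i := by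
  rw [LinearMap.pi_apply_eq_sum_univ f z]
  refine Finset.sum_congr rfl fun i _ => ?_
  rw [smul_eq_mul, mul_comm]
  congr 2
  ext j
  simp [Pi.single_apply, eq_comm]

lemma trace_sum {n m : ℕ} (A : Fin m → Matrix (Fin n) (Fin n) ℝ) (y : Fin m → ℝ)
    (M : Matrix (Fin n) (Fin n) ℝ) :
    ((∑ i, y i • A i) * M).trace = ∑ i, y i * (A i * M).trace := by
  simp [Finset.sum_mul, Matrix.trace_sum]

lemma conMap_surj {n m : ℕ} (A : Fin m → Matrix (Fin n) (Fin n) ℝ)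
    (hA : LinearIndependent ℝ A) : Function.Surjective (conMap A) := by
  rw [← LinearMap.range_eq_top]
  by_contra hne
  obtain ⟨f, hf0, hf⟩ := Submodule.exists_le_ker_of_lt_top _ (lt_top_iff_ne_top.2 hne)
  apply hf0
  have h1 : ∀ M, ((∑ i, f (Pi.single i 1) • A i) * M).trace = 0 := by
    intro M
    have : f (conMap A M) = 0 := hf ⟨M, rfl⟩
    rw [fun_repr] at this
    rw [trace_sum]
    exact this
  have h2 : (∑ i, f (Pi.single i 1) • A i) = 0 := by
    have := h1 (∑ i, f (Pi.single i 1) • A i)ᴴ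
    rwa [Matrix.trace_mul_conjTranspose_self_eq_zero_iff] at this
  have h3 := Fintype.linearIndependent_iff.mp hA _ h2
  ext z
  simp [h3]

/-- Constraint map together with the objective value. -/
def objMap {n m : ℕ} (c : Matrix (Fin n) (Fin n) ℝ)
    (A : Fin m → Matrix (Fin n) (Fin n) ℝ) :
    (Matrix (Fin n) (Fin n) ℝ × ℝ) →ₗ[ℝ] ((Fin m → ℝ) × ℝ) :=
  LinearMap.prod ((conMap A).comp (LinearMap.fst ℝ _ _))
    (((Matrix.traceLinearMap (Fin n) ℝ ℝ).comp (LinearMap.mulLeft ℝ c)).comp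
      (LinearMap.fst ℝ _ _) + LinearMap.snd ℝ _ _)

lemma objMap_apply {n m : ℕ} (c : Matrix (Fin n) (Fin n) ℝ)
    (A : Fin m → Matrix (Fin n) (Fin n) ℝ)
    (M : Matrix (Fin n) (Fin n) ℝ) (s : ℝ) :
    objMap c A (M, s) = (conMap A M, (c * M).trace + s) := rfl

lemma objMap_surj {n m : ℕ} (c : Matrix (Fin n) (Fin n) ℝ)
    (A : Fin m → Matrix (Fin n) (Fin n) ℝ)
    (hA : LinearIndependent ℝ A) : Function.Surjective (objMap c A) := by
  rintro ⟨z, r⟩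
  obtain ⟨M, hM⟩ := conMap_surj A hA z
  exact ⟨(M, r - (c * M).trace), by rw [objMap_apply, hM]; simp⟩

lemma objMap_not_mem {n m : ℕ} (c : Matrix (Fin n) (Fin n) ℝ)
    (A : Fin m → Matrix (Fin n) (Fin n) ℝ) (b : Fin m → ℝ)
    (hc : c.IsSymm) (hAs : ∀ i, (A i).IsSymm)
    (v : ℝ) (hv : ∀ X, PrimalFeasible A b X → v ≤ (c * X).trace) :
    (b, v) ∉ objMap c A '' (symPosDef n ×ˢ Set.Ioi (0 : ℝ)) := by
  rintro ⟨⟨M, s⟩, ⟨hM, hs⟩, h⟩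
  rw [objMap_apply] at h
  obtain ⟨h1, h2⟩ := Prod.ext_iff.mp h
  simp only at h1 h2 hM hs
  have hs' : 0 < s := hs
  have htr : ∀ D : Matrix (Fin n) (Fin n) ℝ, D.IsSymm →
      (D * ((1 / 2 : ℝ) • (M + Mᵀ))).trace = (D * M).trace := by
    intro D hD
    have : (D * Mᵀ).trace = (D * M).trace := by
      rw [← Matrix.trace_transpose, Matrix.transpose_mul, Matrix.transpose_transpose, hD.eq,
        Matrix.trace_mul_comm]
    rw [Matrix.mul_smul, Matrix.mul_add, Matrix.trace_smul, Matrix.trace_add, this, smul_eq_mul]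
    ring
  have hsym : ((1 / 2 : ℝ) • (M + Mᵀ)).IsSymm := by
    unfold Matrix.IsSymm
    rw [Matrix.transpose_smul, Matrix.transpose_add, Matrix.transpose_transpose, add_comm]
  have hfeas : PrimalFeasible A b ((1 / 2 : ℝ) • (M + Mᵀ)) := by
    refine ⟨hsym, fun i => ?_, ?_⟩
    · rw [htr _ (hAs i), ← h1]
      rfl
    · refine Matrix.PosSemidef.of_dotProduct_mulVec_nonneg ?_ fun x => ?_
      · rw [Matrix.IsHermitian, Matrix.conjTranspose_eq_transpose_of_trivial]
        exact hsym
      · have e : x ⬝ᵥ (Mᵀ *ᵥ x) = x ⬝ᵥ (M *ᵥ x) := by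
          rw [Matrix.mulVec_transpose, dotProduct_comm, ← Matrix.dotProduct_mulVec]
        have : 0 ≤ x ⬝ᵥ (M *ᵥ x) := by
          by_cases hx : x = 0
          · simp [hx]
          · exact (hM x hx).le
        simp only [star_trivial, Matrix.smul_mulVec, Matrix.add_mulVec, dotProduct_smul,
          dotProduct_add, e, smul_eq_mul]
        linarith
  have := hv _ hfeas
  rw [htr _ hc] at this
  linarith

lemma functional_split {m : ℕ} (f : StrongDual ℝ ((Fin m → ℝ) × ℝ)) :
    ∃ (g : Fin m → ℝ) (α : ℝ), ∀ z r, f (z, r) = (∑ i, g i * z i) + α * r := by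
  let g : (Fin m → ℝ) →ₗ[ℝ] ℝ := f.toLinearMap.comp (LinearMap.inl ℝ _ _)
  refine ⟨fun i => g (Pi.single i 1), f (0, 1), ?_⟩
  intro z r
  rw [← fun_repr]
  have h : ((z, r) : (Fin m → ℝ) × ℝ) = (z, 0) + r • (0, 1) := by simp
  rw [h, map_add, map_smul, smul_eq_mul, mul_comm]
  rfl

lemma objMap_open {n m : ℕ} (c : Matrix (Fin n) (Fin n) ℝ)
    (A : Fin m → Matrix (Fin n) (Fin n) ℝ) (hA : LinearIndependent ℝ A) :
    IsOpen (objMap c A '' (symPosDef n ×ˢ Set.Ioi (0 : ℝ))) := by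
  have h : IsOpenMap (objMap c A) :=
    LinearMap.isOpenMap_of_finiteDimensional _ (objMap_surj c A hA)
  apply h
  exact IsOpen.prod (symPosDef_open n) isOpen_Ioi

lemma objMap_convex {n m : ℕ} (c : Matrix (Fin n) (Fin n) ℝ)
    (A : Fin m → Matrix (Fin n) (Fin n) ℝ) :
    Convex ℝ (objMap c A '' (symPosDef n ×ˢ Set.Ioi (0 : ℝ))) := by
  apply Convex.linear_image
  exact Convex.prod (symPosDef_convex n) (convex_Ioi 0)

lemma separation {n m : ℕ} (c : Matrix (Fin n) (Fin n) ℝ)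
    (A : Fin m → Matrix (Fin n) (Fin n) ℝ) (b : Fin m → ℝ)
    (hc : c.IsSymm) (hAs : ∀ i, (A i).IsSymm) (hA : LinearIndependent ℝ A)
    (v : ℝ) (hv : ∀ X, PrimalFeasible A b X → v ≤ (c * X).trace) :
    ∃ (g : Fin m → ℝ) (α : ℝ), ∀ M ∈ symPosDef n, ∀ s : ℝ, 0 < s →
      (∑ i, g i * (A i * M).trace) + α * ((c * M).trace + s)
        < (∑ i, g i * b i) + α * v := by
  obtain ⟨f, hf⟩ := geometric_hahn_banach_open_point (objMap_convex c A)
    (objMap_open c A hA) (objMap_not_mem c A b hc hAs v hv)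
  obtain ⟨g, α, hg⟩ := functional_split f
  refine ⟨g, α, fun M hM s hs => ?_⟩
  have h := hf (objMap c A (M, s)) (Set.mem_image_of_mem _ (Set.mk_mem_prod hM hs))
  rw [objMap_apply, hg, hg] at h
  simpa only [conMap_apply] using h

/-- Strong duality under the primal Slater condition. -/
lemma strong_dual {n m : ℕ} (c : Matrix (Fin n) (Fin n) ℝ)
    (A : Fin m → Matrix (Fin n) (Fin n) ℝ) (b : Fin m → ℝ)
    (hc : c.IsSymm) (hAs : ∀ i, (A i).IsSymm) (hA : LinearIndependent ℝ A)
    (X0 : Matrix (Fin n) (Fin n) ℝ) (hX0 : PrimalFeasible A b X0) (hX0p : X0.PosDef)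
    (v : ℝ) (hv : ∀ X, PrimalFeasible A b X → v ≤ (c * X).trace) :
    ∃ y : Fin m → ℝ, (c - ∑ i, y i • A i).PosSemidef ∧ v ≤ ∑ i, b i * y i := by
  obtain ⟨g, α, hmain⟩ := separation c A b hc hAs hA v hv
  have hαneg : α < 0 := by
    have h1 := hmain X0 (symPosDef_of_posDef hX0p) 1 one_pos
    simp only [hX0.2.1] at h1
    have h2 := hv X0 hX0
    by_contra hcon
    push Not at hcon
    nlinarith
  refine ⟨fun i => -(g i) / α, ?_⟩
  set y : Fin m → ℝ := fun i => -(g i) / α with hy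
  have hg : ∀ i, g i = -α * y i := by
    intro i
    have := hαneg.ne
    simp only [hy]
    field_simp
  have hlow : ∀ M ∈ symPosDef n,
      v - ∑ i, b i * y i ≤ ((c - ∑ i, y i • A i) * M).trace := by
    intro M hM
    rw [Matrix.sub_mul, Matrix.trace_sub, trace_sum]
    refine le_of_forall_pos_lt_add fun s hs => ?_
    have h1 := hmain M hM s hs
    simp only [hg, mul_assoc, ← Finset.mul_sum] at h1
    have e : ∑ i, y i * b i = ∑ i, b i * y i := Finset.sum_congr rfl fun i _ => mul_comm _ _
    rw [e] at h1
    have h2 : 0 < (-α) * (((c * M).trace - ∑ i, y i * (A i * M).trace) + s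
        - (v - ∑ i, b i * y i)) := by nlinarith
    have h3 := pos_of_mul_pos_right h2 (by linarith)
    linarith
  have hboth : ∀ M ∈ symPosDef n,
      v - ∑ i, b i * y i ≤ 0 ∧ 0 ≤ ((c - ∑ i, y i • A i) * M).trace := by
    intro M hM
    apply aux_scale
    intro t ht
    have := hlow _ (symPosDef_smul hM ht)
    rwa [Matrix.mul_smul, Matrix.trace_smul, smul_eq_mul] at this
  constructor
  · refine Matrix.PosSemidef.of_dotProduct_mulVec_nonneg ?_ fun x => ?_
    · rw [Matrix.IsHermitian, Matrix.conjTranspose_eq_transpose_of_trivial, Matrix.transpose_sub,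
        hc.eq, Matrix.transpose_sum]
      simp [(hAs _).eq]
    · have h1 : ∀ t : ℝ, 0 < t → -(x ⬝ᵥ ((c - ∑ i, y i • A i) *ᵥ x)) ≤
          t * (c - ∑ i, y i • A i).trace := by
        intro t ht
        have hmem : Matrix.vecMulVec x x + t • (1 : Matrix (Fin n) (Fin n) ℝ) ∈ symPosDef n := by
          apply symPosDef_of_posDef
          have p1 : (Matrix.vecMulVec x x).PosSemidef := by
            simpa using Matrix.posSemidef_vecMulVec_self_star x
          exact Matrix.PosDef.posSemidef_add p1 (Matrix.PosDef.one.smul ht)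
        have := (hboth _ hmem).2
        rw [Matrix.mul_add, Matrix.trace_add, Matrix.mul_smul, Matrix.mul_one, Matrix.trace_smul,
          smul_eq_mul, Matrix.mul_vecMulVec, Matrix.trace_vecMulVec, dotProduct_comm] at this
        linarith
      have := (aux_scale h1).1
      simpa using this
  · have := (hboth X0 (symPosDef_of_posDef hX0p)).1
    linarith

lemma compl {n m : ℕ} (C Cbar : Matrix (Fin n) (Fin n) ℝ)
    (A : Fin m → Matrix (Fin n) (Fin n) ℝ) (b : Fin m → ℝ)
    (hSA : StandingAssumptions C Cbar A b) (ε : ℝ)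
    (X S : Matrix (Fin n) (Fin n) ℝ) (y : Fin m → ℝ)
    (hP : X ∈ PrimalOpt C Cbar A b ε) (hD : (y, S) ∈ DualOpt C Cbar A b ε) : X * S = 0 := by
  obtain ⟨hC, hCb, hAs, hA, X0, y0, S0, hX0, hX0p, -, -⟩ := hSA
  have hc : (C + ε • Cbar).IsSymm := hC.add (hCb.smul ε)
  obtain ⟨y', hy', hle⟩ := strong_dual (C + ε • Cbar) A b hc hAs hA X0 hX0 hX0p _ hP.2
  have h1 := hD.2 y' _ ⟨by
    have := hy'.1
    rwa [Matrix.IsHermitian, Matrix.conjTranspose_eq_transpose_of_trivial] at this,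
    by abel, hy'⟩
  obtain ⟨⟨-, hDe, hSp⟩, -⟩ := hD
  obtain ⟨⟨-, hXe, hXp⟩, -⟩ := hP
  simp only at hDe hSp h1
  have h2 : ((C + ε • Cbar) * X).trace = ∑ i, b i * y i + (S * X).trace := by
    rw [← hDe, Matrix.add_mul, Matrix.trace_add, trace_sum]
    simp only [hXe, mul_comm]
  obtain ⟨h3, h4⟩ := aux_trace hXp hSp
  exact h4 (by linarith)

lemma rank_lsc {n : ℕ} (Xs : Matrix (Fin n) (Fin n) ℝ) :
    ∀ᶠ X in nhds Xs, Xs.rank ≤ X.rank := by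
  let T : Matrix (Fin n) (Fin n) ℝ →ₗ[ℝ] ((Fin n → ℝ) →L[ℝ] (Fin n → ℝ)) :=
    LinearMap.toContinuousLinearMap.toLinearMap.comp
      (Matrix.toLin' (R := ℝ) (m := Fin n) (n := Fin n)).toLinearMap
  have hT : Continuous T := T.continuous_of_finiteDimensional
  have hr : ∀ M, LinearMap.rank ((T M : (Fin n → ℝ) →L[ℝ] (Fin n → ℝ)) :
      (Fin n → ℝ) →ₗ[ℝ] (Fin n → ℝ)) = (M.rank : Cardinal) := by
    intro M
    rw [Matrix.rank, Module.finrank_eq_rank]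
    rfl
  have ho := (isOpen_setOfPred_nat_le_rank (𝕜 := ℝ) (E := Fin n → ℝ) (F := Fin n → ℝ)
    Xs.rank).preimage hT
  have := ho.mem_nhds (x := Xs) (by simp [hr])
  filter_upwards [this] with X hX
  simpa [hr] using hX

/-- convergence of optimal solutions to a strictly complementary solution at `ε̄`
implies that `ε̄` lies in an open interval with strictly complementary solutions and constant
`dim B(·)`, `dim N(·)`. -/
theorem stmt5 {n m : ℕ} (C Cbar : Matrix (Fin n) (Fin n) ℝ)
    (A : Fin m → Matrix (Fin n) (Fin n) ℝ) (b : Fin m → ℝ)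
    (hSA : StandingAssumptions C Cbar A b)
    (εbar : ℝ) (hεbar : εbar ∈ interior (Eset C Cbar A b))
    (Xs Ss : Matrix (Fin n) (Fin n) ℝ) (ys : Fin m → ℝ)
    (hoptP : Xs ∈ PrimalOpt C Cbar A b εbar)
    (hoptD : (ys, Ss) ∈ DualOpt C Cbar A b εbar)
    (hsc : (Xs + Ss).PosDef)
    (hconv : ∀ εk : ℕ → ℝ, (∀ k, εk k ∈ interior (Eset C Cbar A b)) →
      Filter.Tendsto εk Filter.atTop (nhds εbar) →
      ∃ (Xk : ℕ → Matrix (Fin n) (Fin n) ℝ) (yk : ℕ → Fin m → ℝ)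
          (Sk : ℕ → Matrix (Fin n) (Fin n) ℝ),
        (∀ k, Xk k ∈ PrimalOpt C Cbar A b (εk k) ∧ (yk k, Sk k) ∈ DualOpt C Cbar A b (εk k)) ∧
        Filter.Tendsto (fun k => (Xk k, yk k, Sk k)) Filter.atTop (nhds (Xs, ys, Ss))) :
    ∃ ξ : ℝ, 0 < ξ ∧ Set.Ioo (εbar - ξ) (εbar + ξ) ⊆ interior (Eset C Cbar A b) ∧
      ∀ ε ∈ Set.Ioo (εbar - ξ) (εbar + ξ),
        ∃ (X S : Matrix (Fin n) (Fin n) ℝ) (y : Fin m → ℝ),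
          X ∈ PrimalOpt C Cbar A b ε ∧ (y, S) ∈ DualOpt C Cbar A b ε ∧ (X + S).PosDef ∧
          Module.finrank ℝ (LinearMap.range X.mulVecLin) =
            Module.finrank ℝ (LinearMap.range Xs.mulVecLin) ∧
          Module.finrank ℝ (LinearMap.range S.mulVecLin) =
            Module.finrank ℝ (LinearMap.range Ss.mulVecLin) := by
  obtain ⟨δ, hδ, hball⟩ := Metric.isOpen_iff.mp isOpen_interior εbar hεbar
  rw [Real.ball_eq_Ioo] at hball
  by_contra hcon
  push Not at hcon
  have hpos : ∀ k : ℕ, 0 < min δ (1 / ((k : ℝ) + 1)) := fun k => lt_min hδ (by positivity)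
  have hsub : ∀ k : ℕ, Set.Ioo (εbar - min δ (1 / ((k : ℝ) + 1)))
      (εbar + min δ (1 / ((k : ℝ) + 1))) ⊆ interior (Eset C Cbar A b) := by
    intro k
    refine (Set.Ioo_subset_Ioo ?_ ?_).trans hball
    · linarith [min_le_left δ (1 / ((k : ℝ) + 1))]
    · linarith [min_le_left δ (1 / ((k : ℝ) + 1))]
  choose εk hεk hbad using fun k : ℕ => hcon _ (hpos k) (hsub k)
  have hlim : Filter.Tendsto εk Filter.atTop (nhds εbar) := by
    have h0 := tendsto_one_div_add_atTop_nhds_zero_nat (𝕜 := ℝ)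
    refine tendsto_of_tendsto_of_tendsto_of_le_of_le (g := fun k : ℕ => εbar - 1 / ((k : ℝ) + 1))
      (h := fun k : ℕ => εbar + 1 / ((k : ℝ) + 1)) ?_ ?_ ?_ ?_
    · simpa using h0.const_sub εbar
    · simpa using h0.const_add εbar
    · intro k
      have := (hεk k).1
      have h2 := min_le_right δ (1 / ((k : ℝ) + 1))
      simp only
      linarith
    · intro k
      have := (hεk k).2
      have h2 := min_le_right δ (1 / ((k : ℝ) + 1))
      simp only
      linarith
  obtain ⟨Xk, yk, Sk, hopt, hten⟩ := hconv εk (fun k => hsub k (hεk k)) hlim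
  have hX : Filter.Tendsto Xk Filter.atTop (nhds Xs) := (continuous_fst.tendsto _).comp hten
  have hS : Filter.Tendsto Sk Filter.atTop (nhds Ss) :=
    ((continuous_snd.comp continuous_snd).tendsto _).comp hten
  have hdet : Filter.Tendsto (fun k => (Xk k + Sk k).det) Filter.atTop (nhds (Xs + Ss).det) :=
    ((continuous_id.matrix_det).tendsto _).comp (hX.add hS)
  have hne := hdet.eventually_ne hsc.det_pos.ne'
  obtain ⟨k, h1, h2, h3⟩ :=
    (hne.and ((hX.eventually (rank_lsc Xs)).and (hS.eventually (rank_lsc Ss)))).exists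
  obtain ⟨hP, hD⟩ := hopt k
  have hpd : (Xk k + Sk k).PosDef :=
    (hP.1.2.2.add hD.1.2.2).posDef_iff_det_ne_zero.mpr h1
  have hz := compl C Cbar A b hSA _ _ _ _ hP hD
  have hle := Matrix.rank_add_rank_le_card_of_mul_eq_zero hz
  have hge : Fintype.card (Fin n) ≤ Xs.rank + Ss.rank := by
    rw [← Matrix.rank_of_isUnit _ hsc.isUnit]
    have h := LinearMap.rank_add_le Xs.mulVecLin Ss.mulVecLin
    rw [← Matrix.mulVecLin_add] at h
    simp only [LinearMap.rank, ← Module.finrank_eq_rank] at h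
    exact_mod_cast h
  exact hbad k (Xk k) (Sk k) (yk k) hP hD hpd
    (show (Xk k).rank = Xs.rank by omega) (show (Sk k).rank = Ss.rank by omega)
end
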